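/- In the setting of a weakly Hamiltonian action with Casimir-valued cocycle, the flow evaluation ζ(s) := ρ u (φ s) extends to an entire function of exponential type: there exists F : ℂ → ℂ with F differentiable on all of ℂ, F(s) = ζ(s) for every real s, and there exist constants A, B ≥ 0 such that ‖F(z)‖ ≤ A · exp(B · ‖z‖) for all z ∈ ℂ. -/

import Mathlib

/-!
STATEMENT 11: Weakly Hamiltonian action setting.  The flow evaluation
ζ(s) := ρ u (φ s) extends to an entire function of exponential type: there is
F : ℂ → ℂ, differentiable on all of ℂ, agreeing with ζ on ℝ, and constants
A, B ≥ 0 with ‖F(z)‖ ≤ A · exp(B · ‖z‖) for all z ∈ ℂ.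
-/

noncomputable section

/-- The phase space `(Fin n → ℝ) × (Fin n → ℝ)`. -/
abbrev M (n : ℕ) : Type := (Fin n → ℝ) × (Fin n → ℝ)

/-- The standard symplectic form on `M n`. -/
def ω₀ {n : ℕ} (x y : M n) : ℝ :=
  (∑ i, x.1 i * y.2 i) - ∑ i, x.2 i * y.1 i

/-- The exponential in a complex Banach algebra is bounded by the exponential of the norm. -/
theorem norm_exp_le_exp_norm {A : Type*} [NormedRing A] [NormedAlgebra ℂ A] [NormOneClass A]
    [CompleteSpace A] (a : A) : ‖NormedSpace.exp a‖ ≤ Real.exp ‖a‖ := by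
  rw [NormedSpace.exp_eq_tsum ℂ, Real.exp_eq_exp_ℝ]
  refine tsum_of_norm_bounded (NormedSpace.expSeries_div_hasSum_exp ‖a‖) fun k => ?_
  rw [norm_smul, norm_inv, RCLike.norm_natCast, div_eq_inv_mul]
  gcongr
  exact norm_pow_le a k

/-- A solution of the linear equation `Y' = L Y` is given by the exponential of `L`. -/
theorem eq_exp_smul_apply_of_hasDerivAt {E : Type*} [NormedAddCommGroup E] [NormedSpace ℂ E]
    [CompleteSpace E] (L : E →L[ℂ] E) (Y : ℝ → E) (hY : ∀ s, HasDerivAt Y (L (Y s)) s) (s : ℝ) :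
    Y s = NormedSpace.exp ((s : ℂ) • L) (Y 0) := by
  have hexp (t : ℝ) : HasDerivAt (fun t : ℝ => NormedSpace.exp ((t : ℂ) • L) (Y 0))
      (L (NormedSpace.exp ((t : ℂ) • L) (Y 0))) t := by
    have h := (hasDerivAt_exp_smul_const' (𝕂 := ℂ) L (t : ℂ)).scomp t Complex.ofRealCLM.hasDerivAt
    simp only [Complex.ofRealCLM_apply, Complex.ofReal_one, one_smul] at h
    exact ((ContinuousLinearMap.apply ℂ E (Y 0)).restrictScalars ℝ).hasFDerivAt.comp_hasDerivAt t h
  refine congrFun (ODE_solution_unique_univ (v := fun _ => L) (s := fun _ => Set.univ) (t₀ := 0)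
    (K := ‖L‖₊) (fun _ => L.lipschitz.lipschitzOnWith) (fun t => ⟨hY t, trivial⟩)
    (fun t => ⟨hexp t, trivial⟩) ?_) s
  simp

/-- If a curve of linear functionals on a finite-dimensional space satisfies `e' = e ∘ T`, then its
evaluation at any vector extends to an entire function of exponential type. -/
theorem exists_entire_extension_of_dual_hasDerivAt {V : Type*} [AddCommGroup V] [Module ℝ V]
    [FiniteDimensional ℝ V] (T : V →ₗ[ℝ] V) (e : ℝ → V →ₗ[ℝ] ℝ)
    (he : ∀ w s, HasDerivAt (fun s => e s w) (e s (T w)) s) (w : V) :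
    ∃ F : ℂ → ℂ, Differentiable ℂ F ∧ (∀ s : ℝ, F s = e s w) ∧
      ∃ A B : ℝ, 0 ≤ A ∧ 0 ≤ B ∧ ∀ z : ℂ, ‖F z‖ ≤ A * Real.exp (B * ‖z‖) := by
  cases subsingleton_or_nontrivial V with
  | inl hV =>
    refine ⟨0, differentiable_const 0, fun s => ?_, 0, 0, le_rfl, le_rfl, fun z => by simp⟩
    simp [Subsingleton.elim w 0]
  | inr hV =>
  let b := Module.finBasis ℝ V
  have hne : Nonempty (Fin (Module.finrank ℝ V)) := b.index_nonempty
  have hexpand (s : ℝ) (w : V) : ((e s w : ℝ) : ℂ) = ∑ j, (b.repr w j : ℂ) * (e s (b j) : ℂ) := by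
    conv_lhs => rw [← b.sum_repr w, map_sum]
    simp only [map_smul, smul_eq_mul, Complex.ofReal_sum, Complex.ofReal_mul]
  let Y : ℝ → Fin (Module.finrank ℝ V) → ℂ := fun s i => (e s (b i) : ℂ)
  let L : (Fin (Module.finrank ℝ V) → ℂ) →L[ℂ] (Fin (Module.finrank ℝ V) → ℂ) :=
    LinearMap.toContinuousLinearMap
      (Matrix.toLin' (Matrix.of fun i j => (b.repr (T (b i)) j : ℂ)))
  let coord : (Fin (Module.finrank ℝ V) → ℂ) →L[ℂ] ℂ :=
    ∑ j, (b.repr w j : ℂ) • ContinuousLinearMap.proj j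
  have hY (s : ℝ) : HasDerivAt Y (L (Y s)) s := by
    refine hasDerivAt_pi.2 fun i => ?_
    have hL : L (Y s) i = ((e s (T (b i)) : ℝ) : ℂ) := by
      rw [hexpand]
      simp [L, Y, Matrix.mulVec, dotProduct]
    rw [hL]
    exact (he (b i) s).ofReal_comp
  refine ⟨fun z => coord (NormedSpace.exp (z • L) (Y 0)), fun z => ?_, fun s => ?_,
    ‖coord‖ * ‖Y 0‖, ‖L‖, by positivity, by positivity, fun z => ?_⟩
  · have h := (hasDerivAt_exp_smul_const (𝕂 := ℂ) L z).differentiableAt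
    exact coord.differentiableAt.comp z (h.clm_apply (differentiableAt_const _))
  · beta_reduce
    rw [← eq_exp_smul_apply_of_hasDerivAt L Y hY s, hexpand]
    simp [coord, Y]
  · calc ‖coord (NormedSpace.exp (z • L) (Y 0))‖
        ≤ ‖coord‖ * (‖NormedSpace.exp (z • L)‖ * ‖Y 0‖) :=
          coord.le_opNorm_of_le (ContinuousLinearMap.le_opNorm _ _)
      _ ≤ ‖coord‖ * (Real.exp ‖z • L‖ * ‖Y 0‖) := by
          gcongr
          exact norm_exp_le_exp_norm _
      _ = ‖coord‖ * ‖Y 0‖ * Real.exp (‖L‖ * ‖z‖) := by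
          rw [norm_smul, mul_comm ‖z‖]
          ring

theorem flow_evaluation_extends_to_entire_of_exponential_type
    {n : ℕ} (hn : 1 ≤ n)
    {𝔤 : Type*} [LieRing 𝔤] [LieAlgebra ℝ 𝔤] [FiniteDimensional ℝ 𝔤]
    (ρ : 𝔤 →ₗ[ℝ] (M n → ℝ))
    (hρ : ∀ u : 𝔤, ContDiff ℝ (⊤ : ℕ∞) (ρ u))
    -- X u is the Hamiltonian vector field of ρ u
    (X : 𝔤 → M n → M n)
    (hX : ∀ (u : 𝔤) (x w : M n), ω₀ (X u x) w = fderiv ℝ (ρ u) x w)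
    -- c is a bilinear map with {ρ u, ρ v}(x) = ρ ⁅u,v⁆ x + c u v
    (c : 𝔤 →ₗ[ℝ] 𝔤 →ₗ[ℝ] ℝ)
    (hc : ∀ (u v : 𝔤) (x : M n), fderiv ℝ (ρ u) x (X v x) = ρ ⁅u, v⁆ x + c u v)
    -- fixed u, v; φ is an integral curve of X v through x
    (u v : 𝔤) (x : M n) (φ : ℝ → M n)
    (hφ0 : φ 0 = x) (hφ : ∀ s : ℝ, HasDerivAt φ (X v (φ s)) s) :
    ∃ F : ℂ → ℂ, Differentiable ℂ F ∧
      (∀ s : ℝ, F s = ρ u (φ s)) ∧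
      ∃ A B : ℝ, 0 ≤ A ∧ 0 ≤ B ∧
        ∀ z : ℂ, ‖F z‖ ≤ A * Real.exp (B * ‖z‖) := by
  let T : 𝔤 × ℝ →ₗ[ℝ] 𝔤 × ℝ :=
    ((-(LieAlgebra.ad ℝ 𝔤 v : 𝔤 →ₗ[ℝ] 𝔤)).prod (c.flip v)).comp (LinearMap.fst ℝ 𝔤 ℝ)
  let e : ℝ → 𝔤 × ℝ →ₗ[ℝ] ℝ := fun s => ((LinearMap.proj (φ s)).comp ρ).coprod LinearMap.id
  have he (w : 𝔤 × ℝ) (s : ℝ) : HasDerivAt (fun s => e s w) (e s (T w)) s := by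
    have hw := (((hρ w.1).differentiable (by simp)) (φ s)).hasFDerivAt.comp_hasDerivAt s (hφ s)
    rw [hc] at hw
    have hT : e s (T w) = ρ ⁅w.1, v⁆ (φ s) + c w.1 v := by
      rw [← lie_skew w.1 v]
      simp [e, T]
    rw [hT]
    exact hw.add_const w.2
  simpa [e] using exists_entire_extension_of_dual_hasDerivAt T e he (u, 0)
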